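/- Let π* be an optimal assignment for weights w and let Δ^k be the iterates of the recursive sensitivity algorithm. Then the pointwise limit Δ^∞ of the iterates Δ^k exists, is an allowable perturbation for (w, π*), and is critical; equivalently, s_{w+Δ^∞}(a,b) = 0 for every edge (a,b). -/

import Mathlib

open Finset Filter Topology

/-- Cost of an assignment `π : T → A` under weights `w : A × T → ℝ`. -/
noncomputable def cost {A T : Type*} [Fintype T] (w : A × T → ℝ) (π : T → A) : ℝ :=
  ∑ b : T, w (π b, b)

/-- `πs` is an optimal assignment for weights `w`: it is injective (an assignment)
and minimizes the cost among all assignments. -/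
def Optimal {A T : Type*} [Fintype T] (w : A × T → ℝ) (πs : T → A) : Prop :=
  Function.Injective πs ∧ ∀ π : T → A, Function.Injective π → cost w πs ≤ cost w π

/-- `δ` is an allowable perturbation for `(w, πs)`: `πs` remains optimal for `w + δ`. -/
def Allowable {A T : Type*} [Fintype T] (w δ : A × T → ℝ) (πs : T → A) : Prop :=
  Optimal (w + δ) πs

-- The element-wise sensitivity of edge `(a, b)` for weights `w` and assignment `πs`.
open Classical in
noncomputable def sens {A T : Type*} [Fintype T] (w : A × T → ℝ) (πs : T → A)
    (a : A) (b : T) : ℝ :=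
  if πs b = a then
    sInf {c | ∃ π : T → A, Function.Injective π ∧ π b ≠ a ∧ cost w π = c} - cost w πs
  else
    cost w πs - sInf {c | ∃ π : T → A, Function.Injective π ∧ π b = a ∧ cost w π = c}

-- An allowable perturbation `δ` for `(w, πs)` is critical if increasing it by any `ε > 0`
-- on an assigned edge (resp. decreasing by `ε` on an unassigned edge) destroys allowability.
open Classical in
def Critical {A T : Type*} [Fintype T] (w δ : A × T → ℝ) (πs : T → A) : Prop :=
  ∀ (i : A) (j : T), ∀ ε > (0 : ℝ),
    ¬ Allowable w
      (fun e => if e = (i, j) then (if πs j = i then δ e + ε else δ e - ε) else δ e) πs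

/-- Iterates of the recursive sensitivity algorithm: `Δ⁰ = 0` and
`Δ^{k+1}(a,b) = Δ^k(a,b) + s_{w+Δ^k}(a,b)/(2N)` with `N = |T|`. -/
noncomputable def iter {A T : Type*} [Fintype T] (w : A × T → ℝ) (πs : T → A) :
    ℕ → (A × T → ℝ)
  | 0 => 0
  | k + 1 => fun e =>
      iter w πs k e + sens (w + iter w πs k) πs e.1 e.2 / (2 * (Fintype.card T : ℝ))

/-!
Flip the sign of perturbations off the edges of `πs`. The amount by which an assignment `π` is more
expensive than `πs` then drops by the total perturbation of the edges in the symmetric difference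
of `πs` and `π`, so that allowability becomes a packing system `∑ e ∈ D i, x e ≤ g i`, and the
sensitivity of `e` becomes the least slack among the constraints involving `e`. Every constraint
involves at most `2N` edges, so raising each `x e` by `1 / (2N)` of its least slack stays feasible.
The iterates increase and are bounded, hence converge; as their increments tend to zero, so do the
least slacks, and least slacks decrease in `x`, so they vanish in the limit. A point whose least
slack at `e` is zero cannot be increased at `e`, which is criticality.
-/

section Packing

variable {ι E : Type*} {D : ι → Finset E} {g s t : ι → ℝ} {x y : E → ℝ} {c ε : ℝ} {i : ι} {e : E}

/-- The slacks of the constraints `∑ e ∈ D i, x e ≤ g i` at `x`. Feasibility of `x` is written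
`0 ≤ slack D g x`. -/
def slack (D : ι → Finset E) (g : ι → ℝ) (x : E → ℝ) : ι → ℝ :=
  fun i => g i - ∑ e ∈ D i, x e

/-- The least among the slacks `s i` of the constraints `D i` that involve `e`, which is how far a
feasible point can be increased at `e`. It is an infimum, so it is `0` when no constraint involves
`e`. -/
noncomputable def leastSlack (D : ι → Finset E) (s : ι → ℝ) : E → ℝ :=
  fun e => ⨅ i : {i // e ∈ D i}, s i

/-- One step of the relaxation that raises every coordinate simultaneously by the fraction `c` of
its least slack. -/
noncomputable def relax (D : ι → Finset E) (g : ι → ℝ) (c : ℝ) (x : E → ℝ) : E → ℝ :=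
  x + c • leastSlack D (slack D g x)

theorem slack_zero : slack D g 0 = g := by
  ext i
  simp [slack]

theorem slack_add : slack D g (x + y) = slack D (slack D g x) y := by
  ext i
  simp only [slack, Pi.add_apply, sum_add_distrib, sub_add_eq_sub_sub]

theorem slack_antitone : Antitone (slack D g) := fun _ _ hxy _ =>
  sub_le_sub_left (sum_le_sum fun e _ => hxy e) _

theorem continuous_slack : Continuous (slack D g) := by
  unfold slack
  fun_prop

theorem sub_le_slack (hxy : x ≤ y) (hy : 0 ≤ slack D g y) (he : e ∈ D i) :
    y e - x e ≤ slack D g x i := by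
  have hterm : (y - x) e ≤ ∑ e ∈ D i, (y - x) e :=
    single_le_sum (fun e _ => sub_nonneg.2 (hxy e)) he
  have hslack : 0 ≤ slack D g x i - ∑ e ∈ D i, (y - x) e := by
    rw [← add_sub_cancel x y, slack_add] at hy
    exact hy i
  exact hterm.trans (sub_nonneg.1 hslack)

theorem leastSlack_nonneg (hs : 0 ≤ s) : 0 ≤ leastSlack D s := fun _ =>
  Real.iInf_nonneg fun i => hs i

theorem bddBelow_range_of_nonneg (hs : 0 ≤ s) : BddBelow (Set.range s) :=
  ⟨0, Set.forall_mem_range.2 hs⟩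

theorem leastSlack_le (hs : 0 ≤ s) (he : e ∈ D i) : leastSlack D s e ≤ s i :=
  ciInf_le (f := fun i : {i // e ∈ D i} => s i) (bddBelow_range_of_nonneg fun i => hs i) ⟨i, he⟩

theorem leastSlack_mono (hs : 0 ≤ s) (hst : s ≤ t) : leastSlack D s ≤ leastSlack D t := fun _ =>
  ciInf_mono (bddBelow_range_of_nonneg fun i => hs i) fun i => hst i

theorem not_slack_single_nonneg [DecidableEq E] (hs : leastSlack D s e = 0)
    (he : ∃ i, e ∈ D i) (hε : 0 < ε) : ¬ 0 ≤ slack D s (Pi.single e ε) := by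
  intro hfeas
  have : Nonempty {i // e ∈ D i} := nonempty_subtype.2 he
  obtain ⟨⟨i, hi⟩, hlt⟩ := exists_lt_of_ciInf_lt (hs.trans_lt hε)
  have hnonneg : 0 ≤ s i - ε := by simpa [slack, hi] using hfeas i
  exact hlt.not_ge (sub_nonneg.1 hnonneg)

theorem le_relax (hc : 0 ≤ c) (hx : 0 ≤ slack D g x) : x ≤ relax D g c x :=
  le_add_of_nonneg_right (smul_nonneg hc (leastSlack_nonneg hx))

theorem slack_relax_nonneg (hc : 0 ≤ c) (hD : ∀ i, #(D i) * c ≤ 1) (hx : 0 ≤ slack D g x) :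
    0 ≤ slack D g (relax D g c x) := by
  intro i
  rw [relax, slack_add]
  refine sub_nonneg.2 ?_
  set s := slack D g x
  calc ∑ e ∈ D i, c * leastSlack D s e ≤ ∑ _e ∈ D i, c * s i :=
        sum_le_sum fun e he => mul_le_mul_of_nonneg_left (leastSlack_le hx he) hc
    _ = #(D i) * c * s i := by rw [sum_const, nsmul_eq_mul, mul_assoc]
    _ ≤ s i := mul_le_of_le_one_left (hx i) (hD i)

theorem slack_iterate_relax_nonneg (hc : 0 ≤ c) (hD : ∀ i, #(D i) * c ≤ 1)
    (hx : 0 ≤ slack D g x) (k : ℕ) : 0 ≤ slack D g ((relax D g c)^[k] x) := by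
  induction k with
  | zero => exact hx
  | succ k ih =>
    rw [Function.iterate_succ_apply']
    exact slack_relax_nonneg hc hD ih

theorem monotone_iterate_relax (hc : 0 ≤ c) (hD : ∀ i, #(D i) * c ≤ 1)
    (hx : 0 ≤ slack D g x) : Monotone fun k => (relax D g c)^[k] x := by
  refine monotone_nat_of_le_succ fun k => ?_
  rw [Function.iterate_succ_apply']
  exact le_relax hc (slack_iterate_relax_nonneg hc hD hx k)

theorem exists_tendsto_iterate_relax (hc : 0 ≤ c) (hD : ∀ i, #(D i) * c ≤ 1)
    (hcover : ∀ e, ∃ i, e ∈ D i) (hx : 0 ≤ slack D g x) :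
    ∃ y, Tendsto (fun k => (relax D g c)^[k] x) atTop (𝓝 y) := by
  have hmono := monotone_iterate_relax hc hD hx
  choose i hi using hcover
  refine ⟨_, tendsto_atTop_ciSup hmono ⟨fun e => x e + slack D g x (i e), ?_⟩⟩
  rintro _ ⟨k, rfl⟩ e
  exact sub_le_iff_le_add'.1
    (sub_le_slack (hmono k.zero_le) (slack_iterate_relax_nonneg hc hD hx k) (hi e))

theorem slack_nonneg_of_tendsto_iterate_relax (hc : 0 ≤ c) (hD : ∀ i, #(D i) * c ≤ 1)
    (hx : 0 ≤ slack D g x) (hy : Tendsto (fun k => (relax D g c)^[k] x) atTop (𝓝 y)) :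
    0 ≤ slack D g y :=
  ge_of_tendsto' ((continuous_slack.tendsto y).comp hy) (slack_iterate_relax_nonneg hc hD hx)

theorem leastSlack_eq_zero_of_tendsto_iterate_relax (hc : 0 < c) (hD : ∀ i, #(D i) * c ≤ 1)
    (hx : 0 ≤ slack D g x) (hy : Tendsto (fun k => (relax D g c)^[k] x) atTop (𝓝 y)) :
    leastSlack D (slack D g y) = 0 := by
  have hfeas := slack_nonneg_of_tendsto_iterate_relax hc.le hD hx hy
  have hincr (k : ℕ) : c • leastSlack D (slack D g y) ≤
      (relax D g c)^[k + 1] x - (relax D g c)^[k] x := by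
    have hle : (relax D g c)^[k] x ≤ y := (monotone_iterate_relax hc.le hD hx).ge_of_tendsto hy k
    rw [Function.iterate_succ_apply', relax, add_sub_cancel_left]
    exact smul_le_smul_of_nonneg_left (leastSlack_mono hfeas (slack_antitone hle)) hc.le
  have hzero : Tendsto (fun k => (relax D g c)^[k + 1] x - (relax D g c)^[k] x) atTop (𝓝 0) := by
    simpa only [sub_self, Function.comp_def] using (hy.comp (tendsto_add_atTop_nat 1)).sub hy
  have hsmul : c • leastSlack D (slack D g y) = 0 :=
    (ge_of_tendsto' hzero hincr).antisymm (smul_nonneg hc.le (leastSlack_nonneg hfeas))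
  exact (smul_eq_zero.1 hsmul).resolve_left hc.ne'

end Packing

section Assignment

variable {A T : Type*} [Fintype T] {w δ : A × T → ℝ} {πs : T → A}

/-- The set of edges assigned in `π`. -/
def assignedEdges (π : T → A) : Finset (A × T) :=
  univ.map ⟨fun b => (π b, b), Function.LeftInverse.injective (g := Prod.snd) fun _ => rfl⟩

open Classical in
/-- The edges assigned in exactly one of `πs` and `π`. Assignments are bundled as embeddings, so
that they index the constraints of a packing system. -/
noncomputable def reassignedEdges (πs : T → A) (π : T ↪ A) : Finset (A × T) :=
  symmDiff (assignedEdges πs) (assignedEdges π)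

open Classical in
/-- The direction in which perturbing an edge makes `πs` less favourable: `1` on the edges assigned
in `πs` and `-1` on the others. -/
noncomputable def edgeSign (πs : T → A) : A × T → ℝ :=
  fun e => if e ∈ assignedEdges πs then 1 else -1

/-- The costs of the assignments relative to the cost of `πs`. -/
noncomputable def gap (w : A × T → ℝ) (πs : T → A) : (T ↪ A) → ℝ :=
  fun π => cost w π - cost w πs

theorem mem_assignedEdges {π : T → A} {e : A × T} : e ∈ assignedEdges π ↔ π e.2 = e.1 := by
  simp [assignedEdges, Prod.ext_iff]

theorem mem_reassignedEdges {π : T ↪ A} {e : A × T} :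
    e ∈ reassignedEdges πs π ↔ (π e.2 = e.1 ↔ πs e.2 ≠ e.1) := by
  classical
  rw [reassignedEdges, mem_symmDiff, mem_assignedEdges, mem_assignedEdges]
  tauto

theorem card_reassignedEdges_le (πs : T → A) (π : T ↪ A) :
    #(reassignedEdges πs π) ≤ 2 * Fintype.card T := by
  classical
  calc #(reassignedEdges πs π) ≤ #(assignedEdges πs ∪ assignedEdges π) :=
        card_le_card symmDiff_le_sup
    _ ≤ #(assignedEdges πs) + #(assignedEdges π) := card_union_le _ _
    _ = 2 * Fintype.card T := by simp only [assignedEdges, card_map, card_univ, two_mul]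

theorem exists_mem_reassignedEdges [Nontrivial A] (hπs : Function.Injective πs) (e : A × T) :
    ∃ π : T ↪ A, e ∈ reassignedEdges πs π := by
  classical
  obtain ⟨c, hc⟩ : ∃ c, c = e.1 ↔ πs e.2 ≠ e.1 := by
    by_cases h : πs e.2 = e.1
    · obtain ⟨c, hc⟩ := exists_ne e.1
      exact ⟨c, by simp [h, hc]⟩
    · exact ⟨e.1, by simp [h]⟩
  refine ⟨⟨Equiv.swap (πs e.2) c ∘ πs, (Equiv.injective _).comp hπs⟩, mem_reassignedEdges.2 ?_⟩
  simpa using hc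

theorem edgeSign_mul_self (πs : T → A) : edgeSign πs * edgeSign πs = 1 := by
  ext e
  simp only [edgeSign, Pi.mul_apply, Pi.one_apply]
  split_ifs <;> norm_num

theorem edgeSign_mul_cancel_left (πs : T → A) (x : A × T → ℝ) :
    edgeSign πs * (edgeSign πs * x) = x := by
  rw [← mul_assoc, edgeSign_mul_self, one_mul]

theorem cost_eq_sum_assignedEdges (w : A × T → ℝ) (π : T → A) :
    cost w π = ∑ e ∈ assignedEdges π, w e := by
  simp only [cost, assignedEdges, sum_map, Function.Embedding.coeFn_mk]

theorem cost_add (w δ : A × T → ℝ) (π : T → A) : cost (w + δ) π = cost w π + cost δ π :=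
  sum_add_distrib

theorem sum_reassignedEdges_edgeSign_mul (δ : A × T → ℝ) (πs : T → A) (π : T ↪ A) :
    ∑ e ∈ reassignedEdges πs π, edgeSign πs e * δ e = cost δ πs - cost δ π := by
  classical
  have hpos : ∑ e ∈ assignedEdges πs \ assignedEdges π, edgeSign πs e * δ e =
      ∑ e ∈ assignedEdges πs \ assignedEdges π, δ e :=
    sum_congr rfl fun e he => by rw [edgeSign, if_pos (mem_sdiff.1 he).1, one_mul]
  have hneg : ∑ e ∈ assignedEdges π \ assignedEdges πs, edgeSign πs e * δ e =
      -∑ e ∈ assignedEdges π \ assignedEdges πs, δ e := by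
    rw [← sum_neg_distrib]
    exact sum_congr rfl fun e he => by rw [edgeSign, if_neg (mem_sdiff.1 he).2, neg_one_mul]
  rw [cost_eq_sum_assignedEdges, cost_eq_sum_assignedEdges, ← sum_sdiff_sub_sum_sdiff,
    reassignedEdges, symmDiff_def, sup_eq_union, sum_union disjoint_sdiff_sdiff, hpos, hneg,
    sub_eq_add_neg]

theorem gap_add (w δ : A × T → ℝ) (πs : T → A) :
    gap (w + δ) πs = slack (reassignedEdges πs) (gap w πs) (edgeSign πs * δ) := by
  ext π
  simp only [gap, slack, cost_add, Pi.mul_apply, sum_reassignedEdges_edgeSign_mul]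
  ring

theorem optimal_iff_gap_nonneg (hπs : Function.Injective πs) : Optimal w πs ↔ 0 ≤ gap w πs :=
  ⟨fun h π => sub_nonneg.2 (h.2 π π.injective),
    fun h => ⟨hπs, fun π hπ => sub_nonneg.1 (h ⟨π, hπ⟩)⟩⟩

theorem allowable_iff_slack_nonneg (hπs : Function.Injective πs) :
    Allowable w δ πs ↔ 0 ≤ slack (reassignedEdges πs) (gap w πs) (edgeSign πs * δ) := by
  rw [Allowable, optimal_iff_gap_nonneg hπs, gap_add]

theorem leastSlack_gap [Nontrivial A] (h : Optimal w πs) (e : A × T) :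
    leastSlack (reassignedEdges πs) (gap w πs) e =
      sInf {c | ∃ π : T → A, Function.Injective π ∧ (π e.2 = e.1 ↔ πs e.2 ≠ e.1) ∧
        cost w π = c} - cost w πs := by
  have : Nonempty {π : T ↪ A // e ∈ reassignedEdges πs π} :=
    nonempty_subtype.2 (exists_mem_reassignedEdges h.1 e)
  have hbdd : BddBelow (Set.range fun π : {π : T ↪ A // e ∈ reassignedEdges πs π} =>
      cost w π.1) :=
    ⟨cost w πs, Set.forall_mem_range.2 fun π => h.2 π.1 π.1.injective⟩
  have hrange : {c | ∃ π : T → A, Function.Injective π ∧ (π e.2 = e.1 ↔ πs e.2 ≠ e.1) ∧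
      cost w π = c} = Set.range fun π : {π : T ↪ A // e ∈ reassignedEdges πs π} => cost w π.1 := by
    ext c
    constructor
    · rintro ⟨π, hπ, hflip, rfl⟩
      exact ⟨⟨⟨π, hπ⟩, mem_reassignedEdges.2 hflip⟩, rfl⟩
    · rintro ⟨⟨π, hπ⟩, rfl⟩
      exact ⟨π, π.injective, mem_reassignedEdges.1 hπ, rfl⟩
  rw [hrange]
  exact ((OrderIso.subRight (cost w πs)).map_ciInf hbdd).symm

theorem sens_eq_edgeSign_mul_leastSlack [Nontrivial A] (h : Optimal w πs) (a : A) (b : T) :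
    sens w πs a b = (edgeSign πs * leastSlack (reassignedEdges πs) (gap w πs)) (a, b) := by
  rw [Pi.mul_apply, leastSlack_gap h, edgeSign, sens]
  by_cases hab : πs b = a <;> simp [mem_assignedEdges, hab]

theorem edgeSign_mul_iter_succ [Nontrivial A] {k : ℕ} (h : Allowable w (iter w πs k) πs) :
    edgeSign πs * iter w πs (k + 1) =
      relax (reassignedEdges πs) (gap w πs) (2 * (Fintype.card T : ℝ))⁻¹
        (edgeSign πs * iter w πs k) := by
  have hiter : iter w πs (k + 1) = iter w πs k + (2 * (Fintype.card T : ℝ))⁻¹ •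
      (edgeSign πs * leastSlack (reassignedEdges πs) (gap (w + iter w πs k) πs)) := by
    ext ⟨a, b⟩
    simp only [iter, Pi.add_apply, Pi.smul_apply, smul_eq_mul, div_eq_inv_mul,
      sens_eq_edgeSign_mul_leastSlack h]
  rw [hiter, mul_add, mul_smul_comm, edgeSign_mul_cancel_left, gap_add, relax]

theorem card_reassignedEdges_mul_inv_le_one (πs : T → A) (π : T ↪ A) :
    #(reassignedEdges πs π) * (2 * (Fintype.card T : ℝ))⁻¹ ≤ 1 := by
  rw [← div_eq_mul_inv]
  exact div_le_one_of_le₀ (mod_cast card_reassignedEdges_le πs π) (by positivity)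

theorem edgeSign_mul_iter [Nontrivial A] (h : Optimal w πs) (k : ℕ) :
    edgeSign πs * iter w πs k =
      (relax (reassignedEdges πs) (gap w πs) (2 * (Fintype.card T : ℝ))⁻¹)^[k] 0 := by
  induction k with
  | zero => exact mul_zero _
  | succ k ih =>
    have hallow : Allowable w (iter w πs k) πs := by
      rw [allowable_iff_slack_nonneg h.1, ih]
      refine slack_iterate_relax_nonneg (by positivity)
        (card_reassignedEdges_mul_inv_le_one πs) ?_ k
      rw [slack_zero]
      exact (optimal_iff_gap_nonneg h.1).1 h
    rw [edgeSign_mul_iter_succ hallow, ih, Function.iterate_succ_apply']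

theorem critical_of_leastSlack_eq_zero [Nontrivial A] (hπs : Function.Injective πs)
    (h : leastSlack (reassignedEdges πs) (gap (w + δ) πs) = 0) : Critical w δ πs := by
  classical
  intro i j ε hε hallow
  have hperturb : (fun e => if e = (i, j) then (if πs j = i then δ e + ε else δ e - ε) else δ e) =
      δ + edgeSign πs * Pi.single (i, j) ε := by
    ext e
    by_cases he : e = (i, j)
    · subst he
      by_cases hij : πs j = i <;> simp [edgeSign, mem_assignedEdges, hij, sub_eq_add_neg]
    · simp [he]
  rw [hperturb, Allowable, ← add_assoc] at hallow
  have hfeas := (allowable_iff_slack_nonneg hπs).1 hallow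
  rw [edgeSign_mul_cancel_left] at hfeas
  exact not_slack_single_nonneg (congrFun h (i, j)) (exists_mem_reassignedEdges hπs (i, j)) hε hfeas

end Assignment

theorem stmt17_general {A T : Type*} [Fintype T] [Nonempty T] [Nontrivial A]
    (w : A × T → ℝ) (πs : T → A) (hopt : Optimal w πs) :
    ∃ Δinf : A × T → ℝ,
      (∀ a b, Tendsto (fun k => iter w πs k (a, b)) atTop (𝓝 (Δinf (a, b)))) ∧
      Allowable w Δinf πs ∧
      Critical w Δinf πs ∧
      (∀ a b, sens (w + Δinf) πs a b = 0) := by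
  have hc : 0 < (2 * (Fintype.card T : ℝ))⁻¹ := by positivity
  have hD := card_reassignedEdges_mul_inv_le_one πs
  have hfeas : 0 ≤ slack (reassignedEdges πs) (gap w πs) 0 := by
    rwa [slack_zero, ← optimal_iff_gap_nonneg hopt.1]
  obtain ⟨x, hx⟩ :=
    exists_tendsto_iterate_relax hc.le hD (exists_mem_reassignedEdges hopt.1) hfeas
  have hlim : Tendsto (iter w πs) atTop (𝓝 (edgeSign πs * x)) := by
    simpa only [← edgeSign_mul_iter hopt, edgeSign_mul_cancel_left] using hx.const_mul (edgeSign πs)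
  have hallow : Allowable w (edgeSign πs * x) πs := by
    rw [allowable_iff_slack_nonneg hopt.1, edgeSign_mul_cancel_left]
    exact slack_nonneg_of_tendsto_iterate_relax hc.le hD hfeas hx
  have hzero : leastSlack (reassignedEdges πs) (gap (w + edgeSign πs * x) πs) = 0 := by
    rw [gap_add, edgeSign_mul_cancel_left]
    exact leastSlack_eq_zero_of_tendsto_iterate_relax hc hD hfeas hx
  refine ⟨edgeSign πs * x, fun a b => tendsto_pi_nhds.1 hlim (a, b), hallow,
    critical_of_leastSlack_eq_zero hopt.1 hzero, fun a b => ?_⟩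
  rw [sens_eq_edgeSign_mul_leastSlack hallow, hzero, mul_zero, Pi.zero_apply]

theorem stmt17 {A T : Type*} [Fintype A] [Fintype T] [Nonempty A] [Nonempty T]
    (hT : 2 ≤ Fintype.card T) (hAT : Fintype.card T ≤ Fintype.card A)
    (w : A × T → ℝ) (πs : T → A)
    (hopt : Optimal w πs) :
    ∃ Δinf : A × T → ℝ,
      (∀ a b, Tendsto (fun k => iter w πs k (a, b)) atTop (𝓝 (Δinf (a, b)))) ∧
      Allowable w Δinf πs ∧
      Critical w Δinf πs ∧
      (∀ a b, sens (w + Δinf) πs a b = 0) := by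
  have : Nontrivial A := Fintype.one_lt_card_iff_nontrivial.1 (hT.trans hAT)
  exact stmt17_general w πs hopt
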